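/- arXiv:1704.04900 — 3 statements merged into one kernel-verified Lean document; each statement's English description precedes it below -/
import Mathlib

section
/- Consider the linear time-invariant discrete-time plant x_{k+1} = A x_k + B û_k + w_k, y_{k+1} = C x_{k+1} + v_{k+1}, where the noises w_k and v_k are integrable random vectors with zero mean, and the deterministic reference system x_{ref,k+1} = A x_{ref,k} + B u_{ref,k}, y_{ref,k+1} = C x_{ref,k+1}. Suppose the system is square (l = p), B has full column rank p, the feedback gain L_{k+1} ∈ ℝ^{n×l} satisfies L_{k+1} C B = B, and the applied control is û_k = B† L_{k+1}(y_{ref,k+1} − C A x̂_{k|k}), where B† is the Moore–Penrose pseudoinverse of B and x̂_{k|k} is an integrable random state estimate. If the input estimate is unbiased, E[û_k] = u_{ref,k}, and the state estimate is unbiased, E[x̂_{k|k}] = E[x_k], and all random vectors involved are integrable, then the tracking error is unbiased: E[y_{ref,k+1} − y_{k+1}] = 0. -/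
open MeasureTheory Matrix

/-- The Moore–Penrose pseudoinverse, characterized by the four Penrose conditions. -/
def IsMoorePenrose {m p : ℕ} (A : Matrix (Fin m) (Fin p) ℝ)
    (Ad : Matrix (Fin p) (Fin m) ℝ) : Prop :=
  A * Ad * A = A ∧ Ad * A * Ad = Ad ∧ (A * Ad)ᵀ = A * Ad ∧ (Ad * A)ᵀ = Ad * A

/-!
With `K = B† L`, the relation `L C B = B` and full column rank of `B` give `K (C B) = 1`, hence
`(C B) K = 1` because `C B` is square. The control `û = K (y_ref - C A x̂)` therefore satisfies
`C B û = y_ref - C A x̂` at every sample point, not only on average, so that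
`y_ref - y = C A (x̂ - x) - C w - v`, and it remains to take expectations.
-/

section LinearAlgebra

variable {R m n l p : Type*}

theorem mulVec_injective_of_rank_eq_card [Field R] [Fintype n] {B : Matrix m n R}
    (hB : B.rank = Fintype.card n) : Function.Injective B.mulVec := by
  rw [mulVec_injective_iff, linearIndependent_iff_card_eq_finrank_span, Set.finrank,
    ← rank_eq_finrank_span_cols, hB]

theorem mul_eq_one_of_mulVec_injective [Semiring R] [Fintype m] [Fintype n] [DecidableEq n]
    {B : Matrix m n R} {G : Matrix n m R} (hB : Function.Injective B.mulVec)
    (hG : B * G * B = B) : G * B = 1 := by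
  refine ext_of_mulVec_single fun i ↦ hB ?_
  rw [mulVec_mulVec, ← Matrix.mul_assoc, hG, one_mulVec]

theorem IsMoorePenrose.mul_eq_one_of_rank_eq {m p : ℕ} {B : Matrix (Fin m) (Fin p) ℝ}
    {Bdag : Matrix (Fin p) (Fin m) ℝ} (h : IsMoorePenrose B Bdag) (hB : B.rank = p) :
    Bdag * B = 1 :=
  mul_eq_one_of_mulVec_injective
    (mulVec_injective_of_rank_eq_card (hB.trans (Fintype.card_fin p).symm)) h.1

theorem mul_mul_mul_eq_one_of_mul_eq_one [Semiring R] [IsStablyFiniteRing R]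
    [Fintype n] [Fintype p] [DecidableEq p]
    {B L : Matrix n p R} {C G : Matrix p n R} (hG : G * B = 1) (hL : L * C * B = B) :
    C * B * (G * L) = 1 := by
  refine mul_eq_one_comm.mp ?_
  calc G * L * (C * B) = G * (L * C * B) := by simp only [Matrix.mul_assoc]
    _ = 1 := by rw [hL, hG]

theorem sub_output_eq_of_mul_gain_eq_one [Ring R]
    [Fintype n] [Fintype l] [Fintype p] [DecidableEq l]
    {A : Matrix n n R} {B : Matrix n p R} {C : Matrix l n R} {K : Matrix p l R}
    (hK : C * B * K = 1) (x xhat w : n → R) (yref v : l → R) :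
    yref - (C *ᵥ (A *ᵥ x + B *ᵥ (K *ᵥ (yref - (C * A) *ᵥ xhat)) + w) + v) =
      (C * A) *ᵥ (xhat - x) - C *ᵥ w - v := by
  have cancel : C *ᵥ (B *ᵥ (K *ᵥ (yref - (C * A) *ᵥ xhat))) = yref - (C * A) *ᵥ xhat := by
    rw [mulVec_mulVec, mulVec_mulVec, hK, one_mulVec]
  rw [mulVec_add, mulVec_add, cancel, mulVec_mulVec, mulVec_sub]
  abel

end LinearAlgebra

section Expectation

variable {𝕜 Ω n l p : Type*} [RCLike 𝕜] [MeasurableSpace Ω] {μ : Measure Ω}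
  [Fintype n] [Fintype l] [Fintype p]

theorem integrable_mulVec (M : Matrix l n 𝕜) {f : Ω → n → 𝕜} (hf : Integrable f μ) :
    Integrable (fun ω ↦ M *ᵥ f ω) μ :=
  M.mulVecLin.toContinuousLinearMap.integrable_comp hf

theorem integral_mulVec (M : Matrix l n 𝕜) {f : Ω → n → 𝕜} (hf : Integrable f μ) :
    ∫ ω, M *ᵥ f ω ∂μ = M *ᵥ ∫ ω, f ω ∂μ :=
  M.mulVecLin.toContinuousLinearMap.integral_comp_comm hf

theorem unbiased_tracking_square_system_general [DecidableEq l]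
    {A : Matrix n n 𝕜} {B : Matrix n p 𝕜} {C : Matrix l n 𝕜} {K : Matrix p l 𝕜}
    (hK : C * B * K = 1) {x x' xhat w : Ω → n → 𝕜} {u : Ω → p → 𝕜} {yref y' v : Ω → l → 𝕜}
    (hstate : ∀ ω, x' ω = A *ᵥ x ω + B *ᵥ u ω + w ω)
    (hout : ∀ ω, y' ω = C *ᵥ x' ω + v ω)
    (hctrl : ∀ ω, u ω = K *ᵥ (yref ω - (C * A) *ᵥ xhat ω))
    (hx : Integrable x μ) (hxhat : Integrable xhat μ) (hw : Integrable w μ)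
    (hv : Integrable v μ) :
    ∫ ω, (yref ω - y' ω) ∂μ =
      (C * A) *ᵥ (∫ ω, xhat ω ∂μ - ∫ ω, x ω ∂μ) - C *ᵥ ∫ ω, w ω ∂μ - ∫ ω, v ω ∂μ := by
  have herr : Integrable (fun ω ↦ xhat ω - x ω) μ := hxhat.sub hx
  have hCAerr : Integrable (fun ω ↦ (C * A) *ᵥ (xhat ω - x ω)) μ := integrable_mulVec _ herr
  have hCw : Integrable (fun ω ↦ C *ᵥ w ω) μ := integrable_mulVec C hw
  have hdiff : Integrable (fun ω ↦ (C * A) *ᵥ (xhat ω - x ω) - C *ᵥ w ω) μ := hCAerr.sub hCw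
  calc ∫ ω, (yref ω - y' ω) ∂μ
      = ∫ ω, ((C * A) *ᵥ (xhat ω - x ω) - C *ᵥ w ω - v ω) ∂μ := by
        simp only [hout, hstate, hctrl, sub_output_eq_of_mul_gain_eq_one hK]
    _ = ∫ ω, (C * A) *ᵥ (xhat ω - x ω) ∂μ - ∫ ω, C *ᵥ w ω ∂μ - ∫ ω, v ω ∂μ := by
        rw [integral_sub hdiff hv, integral_sub hCAerr hCw]
    _ = (C * A) *ᵥ (∫ ω, xhat ω ∂μ - ∫ ω, x ω ∂μ) - C *ᵥ ∫ ω, w ω ∂μ - ∫ ω, v ω ∂μ := by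
        rw [integral_mulVec _ herr, integral_mulVec C hw, integral_sub hxhat hx]

end Expectation

/-- **Unbiased tracking for square systems (Proposition 1).**
For the plant `x_{k+1} = A x_k + B û_k + w_k`, `y_{k+1} = C x_{k+1} + v_{k+1}`
(zero-mean integrable noises), the deterministic reference system
`x_{ref,k+1} = A x_{ref,k} + B u_{ref,k}`, `y_{ref,k+1} = C x_{ref,k+1}`,
a square system (`l = p`, encoded by using `Fin p` for the output index),
`B` of full column rank, a gain `L` with `L C B = B`, and the control law
`û_k = B† L (y_{ref,k+1} − C A x̂_{k|k})`, unbiasedness of the input estimate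
(`E[û_k] = u_{ref,k}`) and of the state estimate (`E[x̂_{k|k}] = E[x_k]`)
imply the tracking error is unbiased: `E[y_{ref,k+1} − y_{k+1}] = 0`. -/
theorem unbiased_tracking_square_system
    {n p : ℕ}
    (A : Matrix (Fin n) (Fin n) ℝ) (B : Matrix (Fin n) (Fin p) ℝ)
    (C : Matrix (Fin p) (Fin n) ℝ)
    (L : Matrix (Fin n) (Fin p) ℝ) (Bdag : Matrix (Fin p) (Fin n) ℝ)
    {Ω : Type*} [MeasurableSpace Ω] (μ : Measure Ω) [IsProbabilityMeasure μ]
    (xk xk1 xhat : Ω → Fin n → ℝ) (uhat : Ω → Fin p → ℝ)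
    (w : Ω → Fin n → ℝ) (v : Ω → Fin p → ℝ) (yk1 : Ω → Fin p → ℝ)
    (xrefk xrefk1 : Fin n → ℝ) (uref : Fin p → ℝ) (yrefk1 : Fin p → ℝ)
    -- plant dynamics
    (hplant : ∀ ω, xk1 ω = A.mulVec (xk ω) + B.mulVec (uhat ω) + w ω)
    (hout : ∀ ω, yk1 ω = C.mulVec (xk1 ω) + v ω)
    -- reference system
    (href : xrefk1 = A.mulVec xrefk + B.mulVec uref)
    (hrefout : yrefk1 = C.mulVec xrefk1)
    -- noises: integrable with zero mean
    (hw_int : Integrable w μ) (hv_int : Integrable v μ)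
    (hw0 : (∫ ω, w ω ∂μ) = 0) (hv0 : (∫ ω, v ω ∂μ) = 0)
    -- integrability of all random vectors involved
    (hxk_int : Integrable xk μ) (hxk1_int : Integrable xk1 μ)
    (hxhat_int : Integrable xhat μ) (huhat_int : Integrable uhat μ)
    (hyk1_int : Integrable yk1 μ)
    -- B has full column rank and Bdag is its Moore–Penrose pseudoinverse
    (hrank : B.rank = p)
    (hpinv : IsMoorePenrose B Bdag)
    -- the feedback gain satisfies L C B = B
    (hL : L * C * B = B)
    -- the applied control law
    (hctrl : ∀ ω, uhat ω = (Bdag * L).mulVec (yrefk1 - (C * A).mulVec (xhat ω)))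
    -- unbiased input estimate and unbiased state estimate
    (huunb : (∫ ω, uhat ω ∂μ) = uref)
    (hxunb : (∫ ω, xhat ω ∂μ) = ∫ ω, xk ω ∂μ) :
    (∫ ω, (yrefk1 - yk1 ω) ∂μ) = 0 := by
  have hK : C * B * (Bdag * L) = 1 :=
    mul_mul_mul_eq_one_of_mul_eq_one (hpinv.mul_eq_one_of_rank_eq hrank) hL
  rw [unbiased_tracking_square_system_general (yref := fun _ ↦ yrefk1) hK hplant hout hctrl
    hxk_int hxhat_int hw_int hv_int, hxunb, hw0, hv0]
  simp only [sub_self, mulVec_zero]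
end

section
/- Let V = C B ∈ ℝ^{l×p}, let R̃ ∈ ℝ^{l×l} be invertible, suppose Vᵀ R̃⁻¹ V ∈ ℝ^{p×p} is invertible, and define Π = (Vᵀ R̃⁻¹ V)⁻¹ Vᵀ R̃⁻¹ ∈ ℝ^{p×l}. Then for any F ∈ ℝ^{n×l}, the unbiased minimum-variance gain L = B Π + F R̃⁻¹ (I_l − V Π) satisfies L C B = B. -/
open Matrix

section Gain

variable {R m k q : Type*} [Fintype k] [Fintype q] [DecidableEq q]

theorem gain_mul_of_leftInverse [Ring R] [DecidableEq k] {P : Matrix q k R} {V : Matrix k q R}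
    (hPV : P * V = 1) (B : Matrix m q R) (G : Matrix m k R) :
    (B * P + G * (1 - V * P)) * V = B := by
  have residual_mul : (1 - V * P) * V = 0 := by
    rw [Matrix.sub_mul, Matrix.one_mul, Matrix.mul_assoc, hPV, Matrix.mul_one, sub_self]
  calc (B * P + G * (1 - V * P)) * V
      = B * (P * V) + G * ((1 - V * P) * V) := by
        rw [Matrix.add_mul, Matrix.mul_assoc, Matrix.mul_assoc]
    _ = B := by rw [hPV, residual_mul, Matrix.mul_one, Matrix.mul_zero, add_zero]

variable [CommRing R]

/-- The weighted least-squares left inverse `(Vᵀ W V)⁻¹ Vᵀ W` of `V`, which is the matrix `Π` of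
the UMV filter when `W = R̃⁻¹`. The weight `W` is an arbitrary square matrix; the value is
meaningful only when `Vᵀ W V` is invertible, since otherwise Mathlib's inverse is `0`. -/
noncomputable def weightedLeftInverse (W : Matrix k k R) (V : Matrix k q R) : Matrix q k R :=
  (Vᵀ * W * V)⁻¹ * Vᵀ * W

theorem weightedLeftInverse_mul_self {W : Matrix k k R} {V : Matrix k q R}
    (hVWV : IsUnit (Vᵀ * W * V).det) : weightedLeftInverse W V * V = 1 :=
  calc weightedLeftInverse W V * V
      = (Vᵀ * W * V)⁻¹ * (Vᵀ * W * V) := by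
        simp only [weightedLeftInverse, Matrix.mul_assoc]
    _ = 1 := Matrix.nonsing_inv_mul _ hVWV

theorem umv_gain_LCB_eq_B_general [DecidableEq k] (B : Matrix m q R) (V : Matrix k q R)
    (W : Matrix k k R) (G : Matrix m k R) (hVWV : IsUnit (Vᵀ * W * V).det) :
    (B * weightedLeftInverse W V + G * (1 - V * weightedLeftInverse W V)) * V = B :=
  gain_mul_of_leftInverse (weightedLeftInverse_mul_self hVWV) B G

end Gain

/-- **The UMV gain satisfies `L C B = B` (eq. (20)).**
With `V = C B`, invertible `R̃`, invertible `Vᵀ R̃⁻¹ V`,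
`Π = (Vᵀ R̃⁻¹ V)⁻¹ Vᵀ R̃⁻¹`, and `L = B Π + F R̃⁻¹ (I − V Π)` for any `F`,
one has `L (C B) = B`. -/
theorem umv_gain_LCB_eq_B
    {n p l : ℕ}
    (B : Matrix (Fin n) (Fin p) ℝ) (C : Matrix (Fin l) (Fin n) ℝ)
    (Rt : Matrix (Fin l) (Fin l) ℝ) (F : Matrix (Fin n) (Fin l) ℝ)
    (V : Matrix (Fin l) (Fin p) ℝ) (Pi : Matrix (Fin p) (Fin l) ℝ)
    (L : Matrix (Fin n) (Fin l) ℝ)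
    (hV : V = C * B)
    (hRt : IsUnit Rt.det)
    (hVRV : IsUnit (Vᵀ * Rt⁻¹ * V).det)
    (hPi : Pi = (Vᵀ * Rt⁻¹ * V)⁻¹ * Vᵀ * Rt⁻¹)
    (hLdef : L = B * Pi + F * Rt⁻¹ * (1 - V * Pi)) :
    L * (C * B) = B := by
  rw [← hV, hLdef, hPi]
  exact umv_gain_LCB_eq_B_general B V Rt⁻¹ (F * Rt⁻¹) hVRV
end

section
/- Suppose l < p and let N ∈ ℝ^{p×l} be a matrix with rank(N) = l whose columns belong to the row space of C B (the span of the rows of C B, viewed as vectors in ℝ^p). If the system x_{k+1} = A x_k + B u_k, y_k = C x_k is trackable, then the modified system x_{k+1} = A x_k + (B N) ũ_k, y_k = C x_k with input matrix B̃ = B N ∈ ℝ^{n×l} is also trackable. -/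
open Matrix

/-- A system `(A, B, C)` is trackable if for every initial state and every reference
output sequence `(y_ref,k)_{k≥1}` there is an input sequence whose trajectory from the
initial state satisfies `C x_k = y_ref,k` for all `k ≥ 1`. -/
def Trackable {n l p : ℕ} (A : Matrix (Fin n) (Fin n) ℝ) (B : Matrix (Fin n) (Fin p) ℝ)
    (C : Matrix (Fin l) (Fin n) ℝ) : Prop :=
  ∀ x0 : Fin n → ℝ, ∀ yref : ℕ → Fin l → ℝ,
    ∃ u : ℕ → Fin p → ℝ, ∃ x : ℕ → Fin n → ℝ,
      x 0 = x0 ∧ (∀ k, x (k + 1) = A.mulVec (x k) + B.mulVec (u k)) ∧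
        ∀ k, 1 ≤ k → C.mulVec (x k) = yref k

/-!
If `C B` is onto, then at every step the next output `C (A x + B u)` can be given any prescribed
value by the choice of `u`, so feedback tracks any reference. For `B N` in place of `B` this asks
that `C B N` have rank `l`. A vector of the row space of `C B` that is killed by `C B` is orthogonal
to every row, hence to itself, and so is zero. Thus `C B` is injective on its row space, which
contains the range of `N`, and `C B N` has the same rank as `N`.
-/

theorem trackable_of_surjective_mulVec {n l p : ℕ} (A : Matrix (Fin n) (Fin n) ℝ)
    {B : Matrix (Fin n) (Fin p) ℝ} {C : Matrix (Fin l) (Fin n) ℝ}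
    (hCB : Function.Surjective (C * B).mulVec) : Trackable A B C := by
  have exists_input (x : Fin n → ℝ) (y : Fin l → ℝ) : ∃ u, C *ᵥ (A *ᵥ x + B *ᵥ u) = y := by
    obtain ⟨u, hu⟩ := hCB (y - C *ᵥ (A *ᵥ x))
    exact ⟨u, by rw [mulVec_add, mulVec_mulVec u, hu, add_sub_cancel]⟩
  choose feedback output_feedback using exists_input
  intro x₀ yref
  let state : ℕ → Fin n → ℝ :=
    Nat.rec x₀ fun k x => A *ᵥ x + B *ᵥ feedback x (yref (k + 1))
  refine ⟨fun k => feedback (state k) (yref (k + 1)), state, rfl, fun _ => rfl, fun k hk => ?_⟩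
  obtain ⟨j, rfl⟩ := Nat.exists_eq_add_of_le' hk
  exact output_feedback (state j) (yref (j + 1))

section RowSpace

variable {l m p R : Type*} [Fintype p]

theorem disjoint_span_row_ker_mulVecLin [CommRing R] [LinearOrder R] [IsStrictOrderedRing R]
    (M : Matrix l p R) :
    Disjoint (Submodule.span R (Set.range M.row)) (LinearMap.ker M.mulVecLin) := by
  rw [Submodule.disjoint_def]
  intro v hspan hker
  have horth : Submodule.span R (Set.range M.row) ≤ LinearMap.ker (dotProductBilin R R v) := by
    rw [Submodule.span_le, Set.range_subset_iff]
    exact fun i => (dotProduct_comm v (M.row i)).trans (congrFun hker i)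
  exact dotProduct_self_eq_zero.1 (horth hspan)

theorem rank_mul_eq_right_of_disjoint_ker [Fintype m] [CommRing R]
    {M : Matrix l p R} {N : Matrix p m R}
    (h : Disjoint (LinearMap.range N.mulVecLin) (LinearMap.ker M.mulVecLin)) :
    (M * N).rank = N.rank := by
  rw [Matrix.rank, mulVecLin_mul, LinearMap.range_comp, ← LinearMap.range_domRestrict]
  exact LinearMap.finrank_range_of_inj (LinearMap.injective_domRestrict_iff.2 h)

theorem rank_mul_eq_right_of_col_mem_span_row [Fintype m] [CommRing R] [LinearOrder R]
    [IsStrictOrderedRing R] {M : Matrix l p R} {N : Matrix p m R}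
    (hcols : ∀ j, N.col j ∈ Submodule.span R (Set.range M.row)) :
    (M * N).rank = N.rank := by
  have hrange : LinearMap.range N.mulVecLin ≤ Submodule.span R (Set.range M.row) := by
    rw [range_mulVecLin, Submodule.span_le]
    exact Set.range_subset_iff.2 hcols
  exact rank_mul_eq_right_of_disjoint_ker ((disjoint_span_row_ker_mulVecLin M).mono_left hrange)

end RowSpace

theorem surjective_mulVec_of_rank_eq_card {l p K : Type*} [Fintype l] [Fintype p] [Field K]
    {M : Matrix l p K} (hM : M.rank = Fintype.card l) : Function.Surjective M.mulVec := by
  have hrange : LinearMap.range M.mulVecLin = ⊤ :=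
    Submodule.eq_top_of_finrank_eq (hM.trans (Module.finrank_fintype_fun_eq_card K).symm)
  exact LinearMap.range_eq_top.1 hrange

theorem trackable_of_squared_system_general {n p l m : ℕ}
    (A : Matrix (Fin n) (Fin n) ℝ) (B : Matrix (Fin n) (Fin p) ℝ)
    (C : Matrix (Fin l) (Fin n) ℝ) (N : Matrix (Fin p) (Fin m) ℝ) (hrankN : N.rank = l)
    (hcols : ∀ j, N.col j ∈ Submodule.span ℝ (Set.range (C * B).row)) :
    Trackable A (B * N) C := by
  have hrank : (C * (B * N)).rank = Fintype.card (Fin l) := by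
    rw [← Matrix.mul_assoc, rank_mul_eq_right_of_col_mem_span_row hcols, hrankN, Fintype.card_fin]
  exact trackable_of_surjective_mulVec A (surjective_mulVec_of_rank_eq_card hrank)

/-- **Trackability is preserved by squaring with a suitable `N` (`l < p`).**
If `l < p`, `N ∈ ℝ^{p×l}` has rank `l`, every column of `N` lies in the row space of
`C B`, and `(A, B, C)` is trackable, then the modified system `(A, B N, C)` is also
trackable. -/
theorem trackable_of_squared_system
    {n p l : ℕ}
    (A : Matrix (Fin n) (Fin n) ℝ) (B : Matrix (Fin n) (Fin p) ℝ)
    (C : Matrix (Fin l) (Fin n) ℝ)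
    (hlp : l < p)
    (N : Matrix (Fin p) (Fin l) ℝ)
    (hrankN : N.rank = l)
    (hcols : ∀ j : Fin l,
      Nᵀ j ∈ Submodule.span ℝ (Set.range fun i : Fin l => (C * B) i))
    (htrack : Trackable A B C) :
    Trackable A (B * N) C :=
  trackable_of_squared_system_general A B C N hrankN hcols
end
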